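/- Let L be a field of characteristic different from 2, and A a commutative Artinian local L-algebra with maximal ideal m_A whose residue field is L (the composite L → A → A/m_A is an isomorphism); write π : GL_d(A) → GL_d(L) for reduction and regard GL_d(L) inside GL_d(A) via the algebra map. Let G be a group, H ⊆ G a subgroup of index 2, c ∈ G ∖ H with c² = 1, and ρ : G → GL_d(L) a group homomorphism such that the L-subalgebra of the d×d matrix algebra M_d(L) generated by {ρ(h) : h ∈ H} is all of M_d(L). Let ρ̃ : H → GL_d(A) be a group homomorphism with π ∘ ρ̃ = ρ|_H. Then the following are equivalent: (i) there exists x ∈ GL_d(A) with π(x) = 1 such that x · (ρ(c) ρ̃(c h c) ρ(c)) · x⁻¹ = ρ̃(h) for all h ∈ H; (ii) there exists a group homomorphism ρ̃^G : G → GL_d(A) with π ∘ ρ̃^G = ρ and ρ̃^G(h) = ρ̃(h) for all h ∈ H. -/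

import Mathlib

/-!
Write `C` for `ρ(c)` viewed in `GL_d(A)`, so `C² = 1`. Conditions (i) and (ii) are matched through
`y = x C`, which plays the role of the image of `c`. Given an extension, `x = ρ̃ᴳ(c) C` works.

Conversely, given `x`, the element `y = x C` reduces to `ρ(c)` and satisfies
`y ρ̃(chc) = ρ̃(h) y`, so `y²` commutes with `ρ̃(H)`. By Nakayama the matrices `ρ̃(h)` generate
`M_d(A)` over `A` (`adjoin_lift_eq_top`), hence `y²` is a scalar, and the scalar reduces to `1`.
Since `2` is invertible and the maximal ideal of `A` is nil, Newton iteration provides a square root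
`b` of this scalar reducing to `1` (`exists_sqrt_reducing_to_one`). Then `b⁻¹ y` is an involution
with the same conjugation action, and `c ↦ b⁻¹ y` extends `ρ̃` to `G`
(`exists_extension_of_index_two`).
-/

/-- A homomorphism on an index-2 subgroup extends to `G` as soon as an involution `y` of the target
implements conjugation by the involution `c ∉ H`. -/
theorem exists_extension_of_index_two {G K : Type*} [Group G] [Group K] (H : Subgroup G)
    (hind : H.index = 2) (c : G) (hc : c ∉ H) (hcc : c * c = 1)
    (conj : H → H) (hconj : ∀ h : H, ((conj h : H) : G) = c * h * c)
    (f : H →* K) (y : K) (hy : y * y = 1) (hyf : ∀ h : H, y * f (conj h) = f h * y) :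
    ∃ F : G →* K, (∀ h : H, F h = f h) ∧ F c = y := by
  classical
  have hmem : ∀ g : G, g ∉ H → g * c ∈ H := fun g hg => by
    rw [Subgroup.mul_mem_iff_of_index_two hind]; simp [hg, hc]
  have hcoset : ∀ h : H, (h : G) * c ∉ H := fun h => by
    rw [Subgroup.mul_mem_iff_of_index_two hind]; simp [hc]
  let F : G → K := fun g => if hg : g ∈ H then f ⟨g, hg⟩ else f ⟨g * c, hmem g hg⟩ * y
  have hF1 : ∀ h : H, F h = f h := fun h => by simp [F]
  have hF2 : ∀ h : H, F (h * c) = f h * y := fun h => by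
    simp [F, hcoset h, mul_assoc, hcc]
  have hform : ∀ g : G, (∃ h : H, g = h) ∨ ∃ h : H, g = h * c := fun g => by
    by_cases hg : g ∈ H
    · exact Or.inl ⟨⟨g, hg⟩, rfl⟩
    · exact Or.inr ⟨⟨g * c, hmem g hg⟩, by simp [mul_assoc, hcc]⟩
  have hyf' : ∀ h : H, y * f h = f (conj h) * y := fun h => by
    have h1 : conj (conj h) = h := by
      apply Subtype.ext
      rw [hconj, hconj]
      calc c * (c * h * c) * c = (c * c) * h * (c * c) := by group
        _ = h := by simp [hcc]
    simpa [h1] using hyf (conj h)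
  have hmul : ∀ a b : G, F (a * b) = F a * F b := by
    intro a b
    rcases hform a with ⟨h, rfl⟩ | ⟨h, rfl⟩ <;> rcases hform b with ⟨k, rfl⟩ | ⟨k, rfl⟩
    · rw [← Subgroup.coe_mul, hF1, hF1, hF1, map_mul]
    · rw [← mul_assoc, ← Subgroup.coe_mul, hF2, hF1, hF2, map_mul, mul_assoc]
    · have : (h : G) * c * k = ((h * conj k : H) : G) * c := by
        rw [Subgroup.coe_mul, hconj]
        simp [mul_assoc, hcc]
      rw [this, hF2, hF2, hF1, map_mul, mul_assoc, mul_assoc, hyf']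
    · have : (h : G) * c * (k * c) = ((h * conj k : H) : G) := by
        rw [Subgroup.coe_mul, hconj]
        simp [mul_assoc]
      rw [this, hF1, hF2, hF2, map_mul, mul_assoc, ← mul_assoc y, hyf', mul_assoc, hy, mul_one]
  refine ⟨MonoidHom.mk' F hmul, hF1, ?_⟩
  simpa using hF2 1

theorem mem_maximalIdeal_of_map_eq_zero {L A : Type*} [Field L] [CommRing A] [IsLocalRing A]
    (φ : A →+* L) {a : A} (ha : φ a = 0) : a ∈ IsLocalRing.maximalIdeal A := by
  rw [IsLocalRing.mem_maximalIdeal]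
  intro hu
  exact (hu.map φ).ne_zero ha

theorem exists_sqrt_reducing_to_one {L A : Type*} [Field L] (hchar : (2 : L) ≠ 0) [CommRing A]
    [IsArtinianRing A] [IsLocalRing A] [Algebra L A] (π₀ : A →ₐ[L] L) (a : A) (ha : π₀ a = 1) :
    ∃ b : Aˣ, (b : A) * b = a ∧ π₀ b = 1 := by
  have hnil : IsNilpotent (1 - a) := by
    rw [← mem_nilradical, Ring.KrullDimLE.nilradical_eq_maximalIdeal]
    exact mem_maximalIdeal_of_map_eq_zero π₀.toRingHom (by simp [ha])
  have h2 : IsUnit (2 : A) := by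
    have := (IsUnit.mk0 _ hchar).map (algebraMap L A)
    rwa [map_ofNat] at this
  obtain ⟨b, ⟨hb1, hb2⟩, -⟩ := Polynomial.existsUnique_nilpotent_sub_and_aeval_eq_zero
    (P := (Polynomial.X ^ 2 - Polynomial.C a : Polynomial A)) (x := (1 : A))
    (by simpa using hnil) (by simpa [one_add_one_eq_two] using h2)
  have hπ : π₀ b = 1 := by
    have := (hb1.map π₀).eq_zero
    rw [map_sub, map_one, sub_eq_zero] at this
    exact this.symm
  have hu : IsUnit b := by
    by_contra h
    have h' := (IsLocalRing.mem_maximalIdeal b).2 h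
    rw [← Ring.KrullDimLE.nilradical_eq_maximalIdeal, mem_nilradical] at h'
    have := (h'.map π₀).eq_zero
    rw [hπ] at this
    exact one_ne_zero this
  refine ⟨hu.unit, ?_, hπ⟩
  simpa [sub_eq_zero, sq] using hb2

/-- Matrices over `A` whose reductions generate `M_n(L)` as an `L`-algebra generate `M_n(A)` as an
`A`-algebra, by Nakayama's lemma. -/
theorem adjoin_lift_eq_top {L A ι n : Type*} [Field L] [CommRing A] [IsLocalRing A] [Algebra L A]
    [Fintype n] [DecidableEq n] (π₀ : A →ₐ[L] L) (u : ι → Matrix n n A) (v : ι → Matrix n n L)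
    (huv : ∀ i, π₀.mapMatrix (u i) = v i) (hv : Algebra.adjoin L (Set.range v) = ⊤) :
    Algebra.adjoin A (Set.range u) = ⊤ := by
  have hsurj : ∀ X : Matrix n n L, ∃ Y ∈ Algebra.adjoin A (Set.range u), π₀.mapMatrix Y = X := by
    have hle : Algebra.adjoin L (Set.range v) ≤
        ((Algebra.adjoin A (Set.range u)).restrictScalars L).map π₀.mapMatrix := by
      rw [Algebra.adjoin_le_iff]
      rintro _ ⟨i, rfl⟩
      exact ⟨u i, Algebra.subset_adjoin ⟨i, rfl⟩, huv i⟩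
    intro X
    exact hle (hv ▸ Algebra.mem_top : X ∈ Algebra.adjoin L (Set.range v))
  have hN : (⊤ : Submodule A (Matrix n n A)) ≤
      Subalgebra.toSubmodule (Algebra.adjoin A (Set.range u)) := by
    refine Submodule.le_of_le_smul_of_le_jacobson_bot (I := IsLocalRing.maximalIdeal A)
      Module.Finite.fg_top (IsLocalRing.maximalIdeal_le_jacobson _) ?_
    intro M _
    obtain ⟨Y, hY, hYM⟩ := hsurj (π₀.mapMatrix M)
    rw [← add_sub_cancel Y M]
    refine Submodule.add_mem_sup hY ?_
    rw [Matrix.matrix_eq_sum_single (M - Y)]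
    refine Submodule.sum_mem _ fun i _ => Submodule.sum_mem _ fun j _ => ?_
    have hs : Matrix.single i j ((M - Y) i j) = ((M - Y) i j) • Matrix.single i j (1 : A) := by
      simp
    rw [hs]
    refine Submodule.smul_mem_smul (mem_maximalIdeal_of_map_eq_zero π₀.toRingHom ?_) trivial
    have := congrFun (congrFun hYM i) j
    simp only [AlgHom.mapMatrix_apply, Matrix.map_apply] at this
    simp [this]
  exact eq_top_iff.2 fun M _ => hN trivial

/-- An element of `GL_d(A)` reducing to `1` and centralizing a family whose reductions generate
`M_d(L)` is the square of a scalar reducing to `1`. -/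
theorem exists_scalar_sqrt {L A ι : Type*} [Field L] (hchar : (2 : L) ≠ 0) [CommRing A]
    [IsArtinianRing A] [IsLocalRing A] [Algebra L A] (π₀ : A →ₐ[L] L) {d : ℕ}
    (u : ι → GL (Fin d) A) (v : ι → GL (Fin d) L)
    (huv : ∀ i, Matrix.GeneralLinearGroup.map π₀.toRingHom (u i) = v i)
    (hv : Algebra.adjoin L (Set.range fun i => (v i : Matrix (Fin d) (Fin d) L)) = ⊤)
    (z : GL (Fin d) A) (hz : Matrix.GeneralLinearGroup.map π₀.toRingHom z = 1)
    (hcomm : ∀ i, Commute z (u i)) :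
    ∃ b : Aˣ, Matrix.GeneralLinearGroup.scalar (Fin d) b *
        Matrix.GeneralLinearGroup.scalar (Fin d) b = z ∧
      Matrix.GeneralLinearGroup.map π₀.toRingHom
        (Matrix.GeneralLinearGroup.scalar (Fin d) b) = 1 := by
  rcases isEmpty_or_nonempty (Fin d) with hd | ⟨⟨i₀⟩⟩
  · exact ⟨1, Subsingleton.elim _ _, Subsingleton.elim _ _⟩
  have htop := adjoin_lift_eq_top π₀ (fun i => (u i : Matrix (Fin d) (Fin d) A)) _
    (fun i => congrArg Units.val (huv i)) hv
  have hcent : ∀ M : Matrix (Fin d) (Fin d) A, Commute M z := by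
    have hle : Algebra.adjoin A (Set.range fun i => (u i : Matrix (Fin d) (Fin d) A)) ≤
        Subalgebra.centralizer A {(z : Matrix (Fin d) (Fin d) A)} := by
      rw [Algebra.adjoin_le_iff]
      rintro _ ⟨i, rfl⟩
      rw [SetLike.mem_coe, Subalgebra.mem_centralizer_iff]
      rintro _ rfl
      exact congrArg Units.val (hcomm i).eq
    intro M
    have hM := hle (htop ▸ Algebra.mem_top : M ∈ _)
    rw [Subalgebra.mem_centralizer_iff] at hM
    exact (hM _ rfl).symm
  obtain ⟨a, ha⟩ := Matrix.mem_range_scalar_iff_commute_single'.2 fun i j => hcent _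
  have hπa : π₀ a = 1 := by
    have h1 := congrArg (fun g : GL (Fin d) L => (g : Matrix (Fin d) (Fin d) L) i₀ i₀) hz
    simp only [Matrix.GeneralLinearGroup.map_apply, ← ha] at h1
    simpa using h1
  obtain ⟨b, hb, hπb⟩ := exists_sqrt_reducing_to_one hchar π₀ a hπa
  refine ⟨b, ?_, ?_⟩
  · apply Units.ext
    rw [Units.val_mul, Matrix.GeneralLinearGroup.coe_scalar, ← map_mul, hb, ha]
  · rw [Matrix.GeneralLinearGroup.map_scalar]
    have : Units.map (π₀.toRingHom : A →* L) b = 1 := Units.ext hπb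
    erw [this]
    exact map_one _

/-- Appendix Proposition, part (i), at an Artinian local `L`-algebra `A` with residue field
`L`: for `ρ : G → GL_d(L)` with `ρ|_H` absolutely irreducible (the `ρ(h)`, `h ∈ H`, generate
`M_d(L)` as an `L`-algebra), a lift `ρ̃` of `ρ|_H` to `A` is strictly equivalent to its
`ι`-twist (i) if and only if it extends to a lift of `ρ` over `G` (ii). -/
theorem stmt6 {L : Type*} [Field L] (hchar : (2 : L) ≠ 0)
    {A : Type*} [CommRing A] [IsArtinianRing A] [IsLocalRing A] [Algebra L A]
    (π₀ : A →ₐ[L] L)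
    {d : ℕ} {G : Type*} [Group G] (H : Subgroup G) (hind : H.index = 2)
    (c : G) (hc : c ∉ H) (hc2 : c ^ 2 = 1)
    (conj : H → H) (hconj : ∀ h : H, ((conj h : H) : G) = c * h * c)
    (ρ : G →* GL (Fin d) L)
    (hirr : Algebra.adjoin L
      (Set.range fun h : H => ((ρ (h : G) : GL (Fin d) L) : Matrix (Fin d) (Fin d) L)) = ⊤)
    (ρt : H →* GL (Fin d) A)
    (hlift : ∀ h : H, Matrix.GeneralLinearGroup.map π₀.toRingHom (ρt h) = ρ h) :
    (∃ x : GL (Fin d) A,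
        Matrix.GeneralLinearGroup.map π₀.toRingHom x = 1 ∧
        ∀ h : H,
          x * (Matrix.GeneralLinearGroup.map (algebraMap L A) (ρ c) * ρt (conj h) *
              Matrix.GeneralLinearGroup.map (algebraMap L A) (ρ c)) * x⁻¹ = ρt h) ↔
    (∃ ρG : G →* GL (Fin d) A,
        (∀ g : G, Matrix.GeneralLinearGroup.map π₀.toRingHom (ρG g) = ρ g) ∧
        ∀ h : H, ρG h = ρt h) := by
  have hcc : c * c = 1 := by rw [← sq, hc2]
  set C := Matrix.GeneralLinearGroup.map (n := Fin d) (algebraMap L A) (ρ c) with hC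
  have hCC : C * C = 1 := by rw [hC, ← map_mul, ← map_mul, hcc, map_one, map_one]
  have hCπ : Matrix.GeneralLinearGroup.map π₀.toRingHom C = ρ c := by
    ext i j
    simp [hC]
  have hρcc : ρ c * ρ c = 1 := by rw [← map_mul, hcc, map_one]
  constructor
  · rintro ⟨x, hx, hxh⟩
    set y := x * C with hy
    have hyπ : Matrix.GeneralLinearGroup.map π₀.toRingHom y = ρ c := by
      rw [hy, map_mul, hx, hCπ, one_mul]
    have hyf : ∀ h : H, y * ρt (conj h) = ρt h * y := fun h => by
      rw [← hxh h, hy]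
      simp only [mul_assoc, inv_mul_cancel_left, hCC, mul_one]
    have hconj2 : ∀ h : H, conj (conj h) = h := fun h => by
      apply Subtype.ext
      rw [hconj, hconj]
      calc c * (c * h * c) * c = (c * c) * h * (c * c) := by group
        _ = h := by simp [hcc]
    have hcomm : ∀ h : H, Commute (y * y) (ρt h) := fun h => by
      have h1 := hyf (conj h)
      rw [hconj2] at h1
      rw [Commute, SemiconjBy, mul_assoc, h1, ← mul_assoc, hyf, mul_assoc]
    obtain ⟨b, hb, hbπ⟩ := exists_scalar_sqrt hchar π₀ (fun h : H => ρt h) (fun h : H => ρ h) hlift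
      hirr (y * y) (by rw [map_mul, hyπ, hρcc]) hcomm
    set s := Matrix.GeneralLinearGroup.scalar (Fin d) b
    have hs : ∀ g, Commute s⁻¹ g := fun g =>
      Commute.inv_left (Matrix.GeneralLinearGroup.scalar_commute b g)
    obtain ⟨F, hFH, hFc⟩ := exists_extension_of_index_two H hind c hc hcc conj hconj ρt (s⁻¹ * y)
      (by rw [mul_assoc, ← mul_assoc y, ← (hs y).eq, mul_assoc, ← hb]; group)
      (fun h => by rw [mul_assoc, hyf, ← mul_assoc, (hs _).eq, mul_assoc])
    refine ⟨F, fun g => ?_, hFH⟩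
    by_cases hg : g ∈ H
    · exact (congrArg _ (hFH ⟨g, hg⟩)).trans (hlift ⟨g, hg⟩)
    · have hgc : g * c ∈ H := by
        rw [Subgroup.mul_mem_iff_of_index_two hind]; simp [hg, hc]
      have hg' : g = g * c * c := by rw [mul_assoc, hcc, mul_one]
      have h1 := (congrArg _ (hFH ⟨g * c, hgc⟩)).trans (hlift ⟨g * c, hgc⟩)
      simp only at h1
      rw [hg', map_mul F, map_mul, h1, hFc, map_mul _ s⁻¹ y, map_inv, hbπ, hyπ, inv_one,
        one_mul, ← map_mul]
  · rintro ⟨F, hFπ, hFH⟩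
    refine ⟨F c * C, by rw [map_mul, hFπ, hCπ, hρcc], fun h => ?_⟩
    have hCinv : C⁻¹ = C := inv_eq_of_mul_eq_one_left hCC
    have hFcc : F c * F c = 1 := by rw [← map_mul, hcc, map_one]
    have hFinv : (F c)⁻¹ = F c := inv_eq_of_mul_eq_one_left hFcc
    have hCC' : ∀ w, C * (C * w) = w := fun w => by rw [← mul_assoc, hCC, one_mul]
    have hFcc' : ∀ w, F c * (F c * w) = w := fun w => by rw [← mul_assoc, hFcc, one_mul]
    rw [← hFH, ← hFH, hconj, map_mul, map_mul, mul_inv_rev, hCinv, hFinv]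
    simp only [mul_assoc, hCC', hFcc', hFcc, mul_one]
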